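/- arXiv:2406.00331 — 2 statements merged into one kernel-verified Lean document; each statement's English description precedes it below -/
import Mathlib

section
/- For every positive integer k one has λ_{0,k} = 1, and for every integer j ≥ 1 the recursion j·λ_{j,k} = Σ_{i=1}^{j} C(j,i) (ik - j + i) λ_{j-i,k} λ_{i,1} holds, where λ_{0,1} = 1 and λ_{i,1} = (-1)^{i-1} i γ_{i-1} for i ≥ 1, γ_j being the Stieltjes constants. -/
open scoped Real Topology
open Complex Filter MeasureTheory Finset Asymptotics

/-- The analytic extension of `s ↦ ((s-1) * ζ(s))^k` to `s = 1` (where its value is `1`). -/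
noncomputable def zetaPowAux (k : ℕ) : ℂ → ℂ :=
  Function.update (fun s : ℂ => ((s - 1) * riemannZeta s) ^ k) 1 1

/-- `lam k j` is the Taylor coefficient `λ_{j,k}`, i.e. the `j`-th derivative at `s = 1` of the
analytic extension of `(s-1)^k ζ(s)^k`; these numbers are real, and we record their real part. -/
noncomputable def lam (k j : ℕ) : ℝ :=
  (iteratedDeriv j (zetaPowAux k) 1).re

/-- The Fourier coefficients `ℓ_{n,k}` for `n ≥ -k` (an integer index). -/
noncomputable def ell (k : ℕ) (n : ℤ) : ℝ :=
  if 1 ≤ n then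
    (-1 : ℝ) ^ n.toNat *
      ∑ j ∈ Finset.Icc 1 n.toNat,
        ((n.toNat - 1).choose (j - 1) : ℝ) * lam k (j + k) / (Nat.factorial (j + k))
  else
    (-1 : ℝ) ^ k *
      ∑ j ∈ Finset.range ((k + n).toNat + 1),
        ((k - j).choose (-n).toNat : ℝ) * (-1 : ℝ) ^ j * lam k j / (Nat.factorial j)

/-- The Lindelöf Hypothesis: `ζ(1/2 + it) = O(|t|^ε)` for every `ε > 0`. -/
def LindelofHypothesis : Prop :=
  ∀ ε : ℝ, 0 < ε → ∃ C : ℝ, ∀ t : ℝ, 1 ≤ |t| →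
    ‖riemannZeta (1 / 2 + t * Complex.I)‖ ≤ C * |t| ^ ε

/-- `dk k n` is the Piltz divisor function `d_k(n)`: the number of representations of `n` as an
ordered product of `k` positive integers (the `k`-th Dirichlet-convolution power of `ζ`). -/
noncomputable def dk (k n : ℕ) : ℕ := (ArithmeticFunction.zeta ^ k) n

/-- The coefficients `a_{j,k}` of the polynomial `P_k`. -/
noncomputable def aCoef (k j : ℕ) : ℝ :=
  (-1 : ℝ) ^ (k - 1 - j) *
    ∑ i ∈ Finset.range (k - 1 - j + 1), (-1 : ℝ) ^ i * lam k i / (Nat.factorial i)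

/-- The error term `Δ_k(x) = (Σ_{1 ≤ n ≤ x} d_k(n)) - x P_k(log x)` in the Piltz divisor
problem. -/
noncomputable def Deltak (k : ℕ) (x : ℝ) : ℝ :=
  (∑ n ∈ Finset.Icc 1 ⌊x⌋₊, (dk k n : ℝ)) -
    x * ∑ j ∈ Finset.range k, aCoef k j / (Nat.factorial j) * (Real.log x) ^ j

/-- The `n`-th Laguerre polynomial. -/
noncomputable def laguerre (n : ℕ) (u : ℝ) : ℝ :=
  ∑ j ∈ Finset.range (n + 1), (n.choose j : ℝ) * (-1 : ℝ) ^ j * u ^ j / (Nat.factorial j)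

/-- The Bessel function of the first kind of order `0`. -/
noncomputable def besselJ0 (u : ℝ) : ℝ :=
  ∑' m : ℕ, (-1 : ℝ) ^ m * (u / 2) ^ (2 * m) / ((Nat.factorial m : ℝ) ^ 2)

/-- `φ_k(x) = ∫_1^∞ Δ_k(r) J₀(2 √(x log r)) r⁻² dr`. -/
noncomputable def phik (k : ℕ) (x : ℝ) : ℝ :=
  ∫ r in Set.Ioi (1 : ℝ), Deltak k r * besselJ0 (2 * Real.sqrt (x * Real.log r)) / r ^ 2

/-! The Euler operator `f ↦ (z - a) f'` multiplies the `n`-th Taylor coefficient at `a` by `n`. A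
power `g = f ^ k` satisfies the logarithmic-derivative relation `f g' = k f' g`; multiplying it by
`z - a` and comparing `n`-th derivatives at `a` through the Leibniz rule turns it into
`∑ i ≤ n, C(n, i) (n - i) f⁽ⁱ⁾ g⁽ⁿ⁻ⁱ⁾ = k ∑ i ≤ n, C(n, i) i f⁽ⁱ⁾ g⁽ⁿ⁻ⁱ⁾`,
whose `i = 0` term contains the top derivative of `g`. The recursion is the case
`f = (s - 1) ζ(s)`, `a = 1`, where all the derivatives are real because `f` commutes with complex
conjugation. -/

open scoped ComplexConjugate

section EulerOperator

variable {𝕜 F : Type*} [NontriviallyNormedField 𝕜] [NormedAddCommGroup F] [NormedSpace 𝕜 F]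

lemma iteratedDeriv_sub_smul_deriv {f : 𝕜 → F} {a : 𝕜} {n : ℕ} (hf : ContDiffAt 𝕜 (n + 1) f a) :
    iteratedDeriv n (fun z ↦ (z - a) • deriv f z) a = n • iteratedDeriv n f a := by
  induction n generalizing f with
  | zero => simp
  | succ n ih =>
    push_cast at hf
    have hf' : ContDiffAt 𝕜 (n + 1) (deriv f) a := hf.derivWithin le_rfl
    have hf'' : ContDiffAt 𝕜 n (deriv (deriv f)) a := hf'.derivWithin le_rfl
    have hderiv : deriv (fun z ↦ (z - a) • deriv f z) =ᶠ[𝓝 a]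
        (fun z ↦ (z - a) • deriv (deriv f) z) + deriv f := by
      filter_upwards [hf'.eventually (by simp)] with z hz
      have hd : DifferentiableAt 𝕜 (deriv f) z := hz.differentiableAt (by simp)
      rw [deriv_fun_smul (by fun_prop) hd]
      simp
    rw [iteratedDeriv_succ', hderiv.iteratedDeriv_eq, iteratedDeriv_add (by fun_prop)
      (hf'.of_le le_self_add), ih hf', iteratedDeriv_succ', succ_nsmul]

end EulerOperator

section PowerRecurrence

variable {𝕜 𝔸 : Type*} [NontriviallyNormedField 𝕜] [NormedCommRing 𝔸] [NormedAlgebra 𝕜 𝔸]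
  {f g : 𝕜 → 𝔸} {a : 𝕜} {n : ℕ}

lemma iteratedDeriv_mul_sub_smul_deriv (hf : ContDiffAt 𝕜 n f a)
    (hg : ContDiffAt 𝕜 (n + 1) g a) :
    iteratedDeriv n (fun z ↦ f z * ((z - a) • deriv g z)) a =
      ∑ i ∈ range (n + 1),
        n.choose i * iteratedDeriv i f a * ((n - i : ℕ) * iteratedDeriv (n - i) g a) := by
  have hg' : ContDiffAt 𝕜 n (deriv g) a := hg.derivWithin le_rfl
  rw [iteratedDeriv_fun_mul hf (by fun_prop)]
  refine sum_congr rfl fun i _ ↦ ?_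
  have hle : ((n - i : ℕ) + 1 : WithTop ℕ∞) ≤ n + 1 := by
    gcongr
    exact n.sub_le i
  rw [iteratedDeriv_sub_smul_deriv (hg.of_le hle), nsmul_eq_mul]

lemma sum_choose_mul_iteratedDeriv_eq_zero_of_mul_deriv_eq {c : 𝔸} (hf : ContDiffAt 𝕜 (n + 1) f a)
    (hg : ContDiffAt 𝕜 (n + 1) g a)
    (hfg : ∀ᶠ z in 𝓝 a, f z * deriv g z = c * (deriv f z * g z)) :
    ∑ i ∈ range (n + 1), (n.choose i : 𝔸) * (i * c - n + i) * iteratedDeriv (n - i) g a *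
      iteratedDeriv i f a = 0 := by
  have hf₀ : ContDiffAt 𝕜 n f a := hf.of_le le_self_add
  have hg₀ : ContDiffAt 𝕜 n g a := hg.of_le le_self_add
  have hf' : ContDiffAt 𝕜 n (deriv f) a := hf.derivWithin le_rfl
  have heuler : (fun z ↦ f z * ((z - a) • deriv g z)) =ᶠ[𝓝 a]
      fun z ↦ c * (g z * ((z - a) • deriv f z)) := by
    filter_upwards [hfg] with z hz
    rw [mul_smul_comm, hz, mul_smul_comm, mul_smul_comm, mul_comm (g z)]
  have hright : iteratedDeriv n (fun z ↦ g z * ((z - a) • deriv f z)) a =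
      ∑ i ∈ range (n + 1),
        n.choose i * iteratedDeriv (n - i) g a * (i * iteratedDeriv i f a) := by
    rw [iteratedDeriv_mul_sub_smul_deriv hg₀ hf, ← sum_flip]
    refine sum_congr rfl fun i hi ↦ ?_
    have hin : i ≤ n := mem_range_succ_iff.mp hi
    rw [Nat.choose_symm hin, Nat.sub_sub_self hin]
  have hcoeff := heuler.iteratedDeriv_eq n
  rw [iteratedDeriv_mul_sub_smul_deriv hf₀ hg, iteratedDeriv_const_mul c (by fun_prop), hright,
    eq_comm, mul_sum, ← sub_eq_zero, ← sum_sub_distrib] at hcoeff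
  rw [← hcoeff]
  refine sum_congr rfl fun i hi ↦ ?_
  rw [Nat.cast_sub (mem_range_succ_iff.mp hi)]
  ring

lemma mul_deriv_pow {z : 𝕜} (hf : DifferentiableAt 𝕜 f z) (k : ℕ) :
    f z * deriv (f ^ k) z = k * (deriv f z * (f ^ k) z) := by
  cases k with
  | zero => simp
  | succ k =>
    rw [deriv_pow hf, Pi.pow_apply, Nat.add_sub_cancel]
    ring

lemma natCast_mul_iteratedDeriv_pow_mul_eq_sum (hf : ContDiffAt 𝕜 (n + 1) f a) (k : ℕ) :
    n * (iteratedDeriv n (f ^ k) a * f a) =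
      ∑ i ∈ Icc 1 n, (n.choose i : 𝔸) * (i * k - n + i) * iteratedDeriv (n - i) (f ^ k) a *
        iteratedDeriv i f a := by
  have hfg : ∀ᶠ z in 𝓝 a, f z * deriv (f ^ k) z = k * (deriv f z * (f ^ k) z) := by
    filter_upwards [hf.eventually (by simp)] with z hz
    exact mul_deriv_pow (hz.differentiableAt (by simp)) k
  have hsum := sum_choose_mul_iteratedDeriv_eq_zero_of_mul_deriv_eq (g := f ^ k) hf (hf.pow k) hfg
  rw [range_eq_Ico, sum_eq_sum_Ico_succ_bot n.add_one_pos, zero_add,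
    Ico_add_one_right_eq_Icc] at hsum
  simp only [Nat.choose_zero_right, Nat.cast_one, Nat.cast_zero, Nat.sub_zero,
    iteratedDeriv_zero] at hsum
  linear_combination -hsum

end PowerRecurrence

section Conjugation

variable {𝕜 : Type*} [RCLike 𝕜]

lemma iteratedDeriv_conj_conj (f : 𝕜 → 𝕜) (n : ℕ) :
    iteratedDeriv n (conj ∘ f ∘ conj) = conj ∘ iteratedDeriv n f ∘ conj := by
  induction n with
  | zero => simp only [iteratedDeriv_zero]
  | succ n ih => rw [iteratedDeriv_succ, ih, deriv_conj_conj, iteratedDeriv_succ]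

lemma conj_iteratedDeriv_of_conj {f : 𝕜 → 𝕜} (hf : ∀ z, f (conj z) = conj (f z)) (n : ℕ) (z : 𝕜) :
    conj (iteratedDeriv n f z) = iteratedDeriv n f (conj z) := by
  have hfix : conj ∘ f ∘ conj = f := by
    ext z
    simp [hf]
  have hz := congrFun (iteratedDeriv_conj_conj f n) (conj z)
  simpa [hfix] using hz.symm

end Conjugation

lemma zetaPowAux_eq (k : ℕ) : zetaPowAux k = riemannZeta₁ ^ k := by
  ext s
  rcases eq_or_ne s 1 with rfl | hs
  · simp [zetaPowAux]
  · simp [zetaPowAux, hs, riemannZeta_eq_inv_sub_mul hs, sub_ne_zero_of_ne hs]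

lemma zetaPowAux_conj (k : ℕ) (s : ℂ) : zetaPowAux k (conj s) = conj (zetaPowAux k s) := by
  rcases eq_or_ne s 1 with rfl | hs
  · simp [zetaPowAux]
  · have hs' : conj s ≠ 1 := (map_ne_one_iff _ (starRingEnd ℂ).injective).mpr hs
    simp [zetaPowAux, hs, hs', riemannZeta_conj]

lemma ofReal_lam (k j : ℕ) : (lam k j : ℂ) = iteratedDeriv j (riemannZeta₁ ^ k) 1 := by
  rw [← zetaPowAux_eq]
  refine Complex.conj_eq_iff_re.mp ?_
  rw [conj_iteratedDeriv_of_conj (zetaPowAux_conj k), map_one]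

lemma lam_zero (k : ℕ) : lam k 0 = 1 := by
  simp [lam, zetaPowAux]

theorem stmt7 (k : ℕ) (hk : 0 < k) :
    lam k 0 = 1 ∧ ∀ j : ℕ, 1 ≤ j →
      (j : ℝ) * lam k j = ∑ i ∈ Finset.Icc 1 j,
        (j.choose i : ℝ) * ((i : ℝ) * k - j + i) * lam k (j - i) * lam 1 i := by
  refine ⟨lam_zero k, fun j _ ↦ ?_⟩
  have hrec := natCast_mul_iteratedDeriv_pow_mul_eq_sum (n := j) (a := 1)
    differentiable_riemannZeta₁.contDiff.contDiffAt k
  have hlam_one (i : ℕ) : iteratedDeriv i riemannZeta₁ 1 = lam 1 i := by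
    rw [ofReal_lam, pow_one]
  simp only [riemannZeta₁_one, mul_one, hlam_one, ← ofReal_lam] at hrec
  exact_mod_cast hrec
end

section
/- If ℓ_{n,1} = O(n^{-1+ε}) as n → ∞ for every ε > 0, then the Lindelöf Hypothesis holds. -/
open scoped Real Topology
open Complex Filter MeasureTheory Finset Asymptotics

/-!
Put `z = (1 - s) / s`, which maps the half-plane `1/2 < Re s` onto the unit disc. Substituting
`s - 1 = -z / (1 + z)` into the Taylor series of `ζ` at `1` gives
`ζ(s) = 1 / (s - 1) + γ + ∑_{n ≥ 1} ℓ_{n,1} zⁿ`, so `ℓ_{n,1} = O(n ^ (-1 + ε))` bounds the regular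
part of `ζ(s)` by a constant times `(1 - |z|) ^ (-2ε)`. As `1 - |z| ≥ (Re s - 1/2) / |s|²`, this is
a small power of `|t|` at `s = 1/2 + δ + it` with `δ = 1 / (2|t|)`. On the other hand
`ζ'(s) = O(|s|)` for `1/2 ≤ Re s` and `1 ≤ |Im s|`, so moving from there to the critical line
changes `ζ` by `O(|t| δ) = O(1)` only.
-/

section PowerSeries

variable {𝕜 : Type*} [NormedField 𝕜] {a : ℕ → 𝕜} {x : 𝕜}

lemma summable_mul_choose_mul_pow [CompleteSpace 𝕜]
    (ha : Summable fun k ↦ ‖a k‖ * (‖x‖ / (1 - ‖x‖)) ^ k) (hx : ‖x‖ < 1) :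
    Summable fun p : ℕ × ℕ ↦ a p.1 * (p.2 + p.1).choose p.1 * x ^ (p.2 + p.1) := by
  have hx' : 0 < 1 - ‖x‖ := sub_pos.mpr hx
  have hrow (k : ℕ) : HasSum (fun m : ℕ ↦ ‖a k‖ * (m + k).choose k * ‖x‖ ^ (m + k))
      (‖a k‖ * (‖x‖ / (1 - ‖x‖)) ^ k * (1 - ‖x‖)⁻¹) := by
    convert! (hasSum_choose_mul_geometric_of_norm_lt_one k (r := ‖x‖) (by simpa using hx)).mul_left
      (‖a k‖ * ‖x‖ ^ k) using 1
    · ext m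
      ring
    · rw [div_pow, pow_succ]
      field_simp
  refine Summable.of_norm_bounded
    (g := fun p : ℕ × ℕ ↦ ‖a p.1‖ * (p.2 + p.1).choose p.1 * ‖x‖ ^ (p.2 + p.1)) ?_ fun p ↦ ?_
  · refine (summable_prod_of_nonneg fun p ↦ by positivity).mpr ⟨fun k ↦ (hrow k).summable, ?_⟩
    simpa only [(hrow _).tsum_eq] using ha.mul_right (1 - ‖x‖)⁻¹
  · rw [norm_mul, norm_mul, norm_pow]
    gcongr
    simpa using Nat.norm_cast_le (α := 𝕜) ((p.2 + p.1).choose p.1)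

lemma hasSum_sum_choose_mul_pow [CompleteSpace 𝕜] {b : 𝕜}
    (ha : Summable fun k ↦ ‖a k‖ * (‖x‖ / (1 - ‖x‖)) ^ k) (hx : ‖x‖ < 1)
    (hb : HasSum (fun k ↦ a k * (x / (1 - x)) ^ k) b) :
    HasSum (fun n : ℕ ↦ (∑ k ∈ range (n + 1), (n.choose k : 𝕜) * a k) * x ^ n)
      (b * (1 - x)⁻¹) := by
  have hx1 : 1 - x ≠ 0 := sub_ne_zero.mpr fun h ↦ by simp [← h] at hx
  have hrow (k : ℕ) : HasSum (fun m : ℕ ↦ a k * (m + k).choose k * x ^ (m + k))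
      (a k * (x / (1 - x)) ^ k * (1 - x)⁻¹) := by
    convert! (hasSum_choose_mul_geometric_of_norm_lt_one k hx).mul_left (a k * x ^ k) using 1
    · ext m
      ring
    · rw [div_pow, pow_succ]
      field_simp
  have hprod := (summable_mul_choose_mul_pow ha hx).hasSum
  rw [(hprod.prod_fiberwise hrow).unique (hb.mul_right _),
    ← HasAntidiagonal.sigmaAntidiagonalEquivProd.hasSum_iff] at hprod
  convert! hprod.sigma fun n ↦ hasSum_fintype _ using 1
  ext n
  simp only [Function.comp, HasAntidiagonal.sigmaAntidiagonalEquivProd_apply]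
  rw [Finset.sum_coe_sort (antidiagonal n) fun p : ℕ × ℕ ↦
      a p.1 * (p.2 + p.1).choose p.1 * x ^ (p.2 + p.1),
    Finset.Nat.sum_antidiagonal_eq_sum_range_succ_mk, Finset.sum_mul]
  refine Finset.sum_congr rfl fun k hk ↦ ?_
  rw [Nat.sub_add_cancel (Nat.lt_succ_iff.mp (mem_range.mp hk)), mul_comm (a k)]

lemma rpow_mul_pow_le_one_sub_rpow_neg {r p : ℝ} (hr0 : 0 ≤ r) (hr1 : r < 1) (hp0 : 0 ≤ p)
    (hp1 : p ≤ 1) (n : ℕ) : (n : ℝ) ^ p * r ^ n ≤ (1 - r) ^ (-p) := by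
  have hgap : 0 < 1 - r := sub_pos.mpr hr1
  have hu : 0 ≤ n * (1 - r) := by positivity
  have hrpow : (n * (1 - r)) ^ p ≤ Real.exp (n * (1 - r)) :=
    calc (n * (1 - r)) ^ p ≤ (n * (1 - r) + 1) ^ p := by gcongr; linarith
      _ ≤ (n * (1 - r) + 1) ^ (1 : ℝ) := Real.rpow_le_rpow_of_exponent_le (by linarith) hp1
      _ ≤ Real.exp (n * (1 - r)) := by simpa using Real.add_one_le_exp _
  have hpow : r ^ n ≤ Real.exp (-(n * (1 - r))) := by
    rw [← mul_neg, Real.exp_nat_mul]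
    gcongr
    linarith [Real.one_sub_le_exp_neg (1 - r)]
  rw [Real.rpow_neg hgap.le, ← one_div, le_div_iff₀ (by positivity)]
  calc (n : ℝ) ^ p * r ^ n * (1 - r) ^ p = (n * (1 - r)) ^ p * r ^ n := by
        rw [Real.mul_rpow n.cast_nonneg hgap.le]
        ring
    _ ≤ Real.exp (n * (1 - r)) * Real.exp (-(n * (1 - r))) := by gcongr
    _ = 1 := by rw [← Real.exp_add, add_neg_cancel, Real.exp_zero]

lemma norm_le_of_hasSum_mul_pow_of_norm_le_rpow {C ε : ℝ} {b : 𝕜} (hε : 0 < ε) (hε' : ε ≤ 1 / 2)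
    (ha : ∀ n : ℕ, 1 ≤ n → ‖a n‖ ≤ C * (n : ℝ) ^ (-1 + ε)) (hx : ‖x‖ < 1)
    (hb : HasSum (fun n ↦ a (n + 1) * x ^ (n + 1)) b) :
    ‖b‖ ≤ C * (∑' n : ℕ, ((n + 1 : ℕ) : ℝ) ^ (-1 - ε)) * (1 - ‖x‖) ^ (-(2 * ε)) := by
  have hC : 0 ≤ C := by simpa using (norm_nonneg _).trans (ha 1 le_rfl)
  have hsum : Summable fun n : ℕ ↦ ((n + 1 : ℕ) : ℝ) ^ (-1 - ε) :=
    (summable_nat_add_iff 1).mpr (Real.summable_nat_rpow.mpr (by linarith))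
  refine hb.norm_le_of_bounded ((hsum.hasSum.mul_left C).mul_right _) fun n ↦ ?_
  rw [norm_mul, norm_pow]
  calc ‖a (n + 1)‖ * ‖x‖ ^ (n + 1)
      ≤ C * ((n + 1 : ℕ) : ℝ) ^ (-1 + ε) * ‖x‖ ^ (n + 1) := by gcongr; exact ha _ n.succ_pos
    _ = C * ((n + 1 : ℕ) : ℝ) ^ (-1 - ε) * (((n + 1 : ℕ) : ℝ) ^ (2 * ε) * ‖x‖ ^ (n + 1)) := by
        rw [show -1 + ε = -1 - ε + 2 * ε by ring, Real.rpow_add (by positivity)]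
        ring
    _ ≤ C * ((n + 1 : ℕ) : ℝ) ^ (-1 - ε) * (1 - ‖x‖) ^ (-(2 * ε)) := by
        gcongr
        exact rpow_mul_pow_le_one_sub_rpow_neg (norm_nonneg x) hx (by linarith) (by linarith) _

end PowerSeries

section TaylorCoefficients

lemma iteratedDeriv_conj_of_map_conj {𝕜 : Type*} [NontriviallyNormedField 𝕜] [StarRing 𝕜]
    [NormedStarGroup 𝕜] {f : 𝕜 → 𝕜} (hf : ∀ s, f (starRingEnd 𝕜 s) = starRingEnd 𝕜 (f s))
    (n : ℕ) (s : 𝕜) :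
    iteratedDeriv n f (starRingEnd 𝕜 s) = starRingEnd 𝕜 (iteratedDeriv n f s) := by
  induction n generalizing s with
  | zero => simpa using hf s
  | succ n ih =>
    have hconj : starRingEnd 𝕜 ∘ iteratedDeriv n f ∘ starRingEnd 𝕜 = iteratedDeriv n f := by
      ext z
      simp [ih]
    rw [iteratedDeriv_succ]
    conv_lhs => rw [← hconj, deriv_conj_conj]
    simp

lemma riemannZeta₁_conj (s : ℂ) :
    riemannZeta₁ (starRingEnd ℂ s) = starRingEnd ℂ (riemannZeta₁ s) := by
  rcases eq_or_ne s 1 with rfl | hs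
  · simp
  · have hs' : starRingEnd ℂ s ≠ 1 := by simpa using (starRingEnd ℂ).injective.ne hs
    simp [riemannZeta₁, riemannZeta₀, hs, hs', riemannZeta_conj]

lemma zetaPowAux_one : zetaPowAux 1 = riemannZeta₁ := by
  ext s
  rcases eq_or_ne s 1 with rfl | hs
  · simp [zetaPowAux]
  · simp [zetaPowAux, hs, riemannZeta_eq_inv_sub_mul hs, sub_ne_zero.mpr hs]

lemma ofReal_lam_one (j : ℕ) : (lam 1 j : ℂ) = iteratedDeriv j riemannZeta₁ 1 := by
  rw [lam, zetaPowAux_one, ← conj_eq_iff_re]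
  simpa using (iteratedDeriv_conj_of_map_conj riemannZeta₁_conj j 1).symm

lemma hasSum_lam_one (s : ℂ) :
    HasSum (fun k ↦ (lam 1 k / k.factorial : ℂ) * (s - 1) ^ k) (riemannZeta₁ s) := by
  convert! hasSum_taylorSeries_of_entire differentiable_riemannZeta₁ 1 s using 2 with k
  rw [ofReal_lam_one, smul_eq_mul, smul_eq_mul]
  ring

lemma hasSum_lam_one_add_two {s : ℂ} (hs : s ≠ 1) :
    HasSum (fun k ↦ (lam 1 (k + 2) / (k + 2).factorial : ℂ) * (s - 1) ^ k)
      ((riemannZeta s - (s - 1)⁻¹ - Real.eulerMascheroniConstant) * (s - 1)⁻¹) := by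
  have hs' : s - 1 ≠ 0 := sub_ne_zero.mpr hs
  convert! ((hasSum_nat_add_iff' 2).mpr (hasSum_lam_one s)).mul_right ((s - 1) ^ 2)⁻¹ using 1
  · ext k
    field_simp
    ring
  · simp only [Finset.sum_range_succ, Finset.sum_range_zero, ofReal_lam_one, iteratedDeriv_zero,
      iteratedDeriv_one, riemannZeta₁_one, deriv_riemannZeta₁_one, riemannZeta_eq_inv_sub_mul hs,
      Nat.factorial_zero, Nat.factorial_one, Nat.cast_one]
    field_simp
    ring

lemma summable_norm_lam_one_add_two (r : ℝ) :
    Summable fun k ↦ ‖(lam 1 (k + 2) / (k + 2).factorial : ℂ)‖ * |r| ^ k := by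
  rcases eq_or_ne r 0 with rfl | hr
  · exact summable_of_ne_finset_zero (s := {0}) fun k hk ↦ by simp_all
  simpa using (hasSum_lam_one_add_two (s := 1 + r) (by simpa using hr)).summable.norm

lemma ell_one_add_one (n : ℕ) :
    ell 1 (n + 1 : ℕ) = (-1) ^ (n + 1) *
      ∑ k ∈ range (n + 1), (n.choose k : ℝ) * (lam 1 (k + 2) / (k + 2).factorial) := by
  rw [ell, if_pos (by push_cast; lia), Int.toNat_natCast, Finset.range_eq_Ico,
    ← Finset.Ico_add_one_right_eq_Icc, ← Finset.sum_Ico_add' _ 0 (n + 1) 1]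
  simp [mul_div_assoc]

end TaylorCoefficients

section HalfPlane

variable {s : ℂ}

lemma norm_one_sub_div_self_le (hs : s ≠ 0) :
    ‖(1 - s) / s‖ ≤ 1 - (s.re - 1 / 2) / ‖s‖ ^ 2 := by
  have hnum : ‖1 - s‖ ^ 2 = ‖s‖ ^ 2 - 2 * (s.re - 1 / 2) := by
    simp only [Complex.sq_norm, normSq_apply, sub_re, one_re, sub_im, one_im]
    ring
  have hpos : 0 < ‖s‖ ^ 2 := by positivity
  have hle : s.re - 1 / 2 ≤ ‖s‖ ^ 2 := by
    nlinarith [Complex.sq_norm_sub_sq_re s, sq_nonneg s.im, sq_nonneg (s.re - 1 / 2)]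
  refine le_of_sq_le_sq ?_ (sub_nonneg.mpr ((div_le_one hpos).mpr hle))
  rw [norm_div, div_pow, hnum, sub_div, div_self hpos.ne', mul_div_assoc]
  nlinarith [sq_nonneg ((s.re - 1 / 2) / ‖s‖ ^ 2)]

lemma norm_one_sub_div_self_lt_one (hs : 1 / 2 < s.re) : ‖(1 - s) / s‖ < 1 := by
  have hs0 : s ≠ 0 := ne_zero_of_re_pos (by linarith)
  have hgap : 0 < (s.re - 1 / 2) / ‖s‖ ^ 2 := div_pos (by linarith) (by positivity)
  linarith [norm_one_sub_div_self_le hs0]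

lemma hasSum_ell_one (hs : 1 / 2 < s.re) (hs1 : s ≠ 1) :
    HasSum (fun n : ℕ ↦ (ell 1 (n + 1 : ℕ) : ℂ) * ((1 - s) / s) ^ (n + 1))
      (riemannZeta s - (s - 1)⁻¹ - Real.eulerMascheroniConstant) := by
  have hs0 : s ≠ 0 := ne_zero_of_re_pos (by linarith)
  set x := (s - 1) / s with hx_def
  have hz : (1 - s) / s = -x := by rw [hx_def, ← neg_div, neg_sub]
  have hx : ‖x‖ < 1 := by simpa [hz] using norm_one_sub_div_self_lt_one hs
  have hx1 : 1 - x = s⁻¹ := by rw [hx_def]; field_simp; ring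
  have hsum := summable_norm_lam_one_add_two (‖x‖ / (1 - ‖x‖))
  rw [abs_of_nonneg (div_nonneg (norm_nonneg x) (sub_nonneg.mpr hx.le))] at hsum
  have hb := hasSum_lam_one_add_two hs1
  rw [show s - 1 = x / (1 - x) by rw [hx1, hx_def]; field_simp] at hb
  convert! (hasSum_sum_choose_mul_pow hsum hx hb).mul_right x using 1
  · ext n
    rw [ell_one_add_one, hz, neg_pow x]
    push_cast
    rw [mul_mul_mul_comm, ← mul_pow, neg_one_mul, neg_neg, one_pow, one_mul, pow_succ, mul_assoc]
  · rw [hx1, hx_def]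
    field_simp

lemma norm_riemannZeta_sub_le_of_abs_ell_le {C ε : ℝ} (hε : 0 < ε) (hε' : ε ≤ 1 / 2)
    (h : ∀ n : ℕ, 1 ≤ n → |ell 1 n| ≤ C * (n : ℝ) ^ (-1 + ε)) (hs : 1 / 2 < s.re) (hs1 : s ≠ 1) :
    ‖riemannZeta s - (s - 1)⁻¹ - Real.eulerMascheroniConstant‖ ≤
      C * (∑' n : ℕ, ((n + 1 : ℕ) : ℝ) ^ (-1 - ε)) *
        ((s.re - 1 / 2) / ‖s‖ ^ 2) ^ (-(2 * ε)) := by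
  have hC : 0 ≤ C := by simpa using (abs_nonneg _).trans (h 1 le_rfl)
  have hs0 : s ≠ 0 := ne_zero_of_re_pos (by linarith)
  refine (norm_le_of_hasSum_mul_pow_of_norm_le_rpow (a := fun n ↦ (ell 1 n : ℂ)) hε hε'
    (by simpa using h) (norm_one_sub_div_self_lt_one hs) (hasSum_ell_one hs hs1)).trans ?_
  refine mul_le_mul_of_nonneg_left (Real.rpow_le_rpow_of_nonpos ?_ ?_ (by linarith))
    (mul_nonneg hC (tsum_nonneg fun n ↦ by positivity))
  · exact div_pos (by linarith) (by positivity)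
  · linarith [norm_one_sub_div_self_le hs0]

end HalfPlane

section MellinTail

variable {E : Type*} [NormedAddCommGroup E] [NormedSpace ℂ E] {f : ℝ → E} {C : ℝ} {s : ℂ}

lemma integrableOn_Ioi_cpow_smul_of_norm_le (hf : AEStronglyMeasurable f) (hC : ∀ t, ‖f t‖ ≤ C)
    (hs : 0 < s.re) : IntegrableOn (fun t : ℝ ↦ (t : ℂ) ^ (-s - 1) • f t) (Set.Ioi 1) :=
  (integrableOn_Ioi_cpow_of_lt (by rw [sub_re, neg_re, one_re]; linarith) zero_lt_one).smul_bdd C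
    hf.restrict (Eventually.of_forall hC)

lemma norm_integral_Ioi_cpow_smul_le (hC : ∀ t, ‖f t‖ ≤ C) (hs : 0 < s.re) :
    ‖∫ t in Set.Ioi (1 : ℝ), (t : ℂ) ^ (-s - 1) • f t‖ ≤ C / s.re := by
  have hval : ∫ t in Set.Ioi (1 : ℝ), t ^ (-s.re - 1) * C = C / s.re := by
    rw [integral_mul_const, integral_Ioi_rpow_of_lt (by linarith) zero_lt_one, sub_add_cancel,
      Real.one_rpow, neg_div_neg_eq, one_div_mul_eq_div]
  rw [← hval]
  refine norm_integral_le_of_norm_le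
    ((integrableOn_Ioi_rpow_of_lt (by linarith) zero_lt_one).mul_const C) ?_
  filter_upwards [ae_restrict_mem measurableSet_Ioi] with t ht
  have ht0 : 0 < t := zero_lt_one.trans ht
  rw [norm_smul, norm_cpow_eq_rpow_re_of_pos ht0, sub_re, neg_re, one_re]
  gcongr
  exact hC t

lemma differentiableAt_integral_Ioi_cpow_smul (hf : AEStronglyMeasurable f) (hC : ∀ t, ‖f t‖ ≤ C)
    (hs : 0 < s.re) :
    DifferentiableAt ℂ (fun s ↦ ∫ t in Set.Ioi (1 : ℝ), (t : ℂ) ^ (-s - 1) • f t) s := by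
  set g := (Set.Ioi (1 : ℝ)).indicator f
  have hg (t : ℝ) : ‖g t‖ ≤ C := (norm_indicator_le_norm_self f t).trans (hC t)
  have hmellin (s : ℂ) :
      ∫ t in Set.Ioi (1 : ℝ), (t : ℂ) ^ (-s - 1) • f t = mellin g (-s) := by
    have hsmul (t : ℝ) : (t : ℂ) ^ (-s - 1) • g t =
        (Set.Ioi 1).indicator (fun t : ℝ ↦ (t : ℂ) ^ (-s - 1) • f t) t :=
      (Set.indicator_smul_apply _ (fun t : ℝ ↦ (t : ℂ) ^ (-s - 1)) f t).symm
    simp only [mellin, hsmul]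
    rw [setIntegral_indicator measurableSet_Ioi,
      Set.inter_eq_right.mpr (Set.Ioi_subset_Ioi zero_le_one)]
  have hloc : LocallyIntegrable g :=
    (locallyIntegrable_const C).mono (hf.indicator measurableSet_Ioi)
      (Eventually.of_forall fun t ↦ (hg t).trans (le_abs_self C))
  have htop : g =O[atTop] fun t : ℝ ↦ t ^ (-(0 : ℝ)) :=
    IsBigO.of_bound C (Eventually.of_forall fun t ↦ by simpa using hg t)
  have hzero : g =O[𝓝[>] 0] fun t : ℝ ↦ t ^ (-(-s.re - 1)) := by
    refine EventuallyEq.trans_isBigO ?_ (isBigO_zero _ _)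
    filter_upwards [nhdsWithin_le_nhds (Iio_mem_nhds (zero_lt_one' ℝ))] with t ht
    exact Set.indicator_of_notMem (Set.notMem_Ioi.mpr ht.le) f
  simp only [hmellin]
  exact (mellin_differentiableAt_of_isBigO_rpow (hloc.locallyIntegrableOn _) htop
    (by simpa using hs) hzero (by simp)).comp s differentiable_neg.differentiableAt

end MellinTail

section ZetaBounds

variable {s : ℂ}

lemma norm_ofReal_fract_le_one (t : ℝ) : ‖((Int.fract t : ℝ) : ℂ)‖ ≤ 1 := by
  rw [norm_real, Real.norm_of_nonneg (Int.fract_nonneg t)]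
  exact (Int.fract_lt_one t).le

lemma aestronglyMeasurable_ofReal_fract :
    AEStronglyMeasurable fun t : ℝ ↦ ((Int.fract t : ℝ) : ℂ) :=
  (measurable_ofReal.comp measurable_fract).aestronglyMeasurable

lemma riemannZeta_eq_sub_integral_fract_of_one_lt_re (hs : 1 < s.re) :
    riemannZeta s =
      s / (s - 1) - s * ∫ t in Set.Ioi (1 : ℝ), (t : ℂ) ^ (-s - 1) • ((Int.fract t : ℝ) : ℂ) := by
  have hint : ∫ t in Set.Ioi (1 : ℝ), (t : ℂ) ^ (-s) = (s - 1)⁻¹ := by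
    rw [integral_Ioi_cpow_of_lt (by simpa using hs) zero_lt_one, ofReal_one, one_cpow,
      show -s + 1 = -(s - 1) by ring, neg_div_neg_eq, one_div]
  have habel : riemannZeta s =
      s * ∫ t in Set.Ioi (1 : ℝ), (⌊t⌋₊ : ℂ) * (t : ℂ) ^ (-(s + 1)) := by
    have h := LSeries_eq_mul_integral_of_nonneg (fun _ ↦ 1) zero_le_one hs
      (by simpa using isBigO_refl _ _) fun _ ↦ zero_le_one
    simp only [ofReal_one, sum_const, Nat.card_Icc, add_tsub_cancel_right, nsmul_eq_mul,
      mul_one] at h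
    rw [← h]
    exact (LSeries_one_eq_riemannZeta hs).symm
  rw [habel, div_eq_mul_inv, ← mul_sub, ← hint,
    ← integral_sub (integrableOn_Ioi_cpow_of_lt (by simpa using hs) zero_lt_one)
      (integrableOn_Ioi_cpow_smul_of_norm_le aestronglyMeasurable_ofReal_fract
        norm_ofReal_fract_le_one (by linarith))]
  congr 1
  refine setIntegral_congr_fun measurableSet_Ioi fun t ht ↦ ?_
  have ht0 : 0 < t := zero_lt_one.trans ht
  have hfloor : (⌊t⌋₊ : ℂ) = t - (Int.fract t : ℝ) := by
    rw [← ofReal_sub, Int.self_sub_fract, ← natCast_floor_eq_intCast_floor ht0.le, ofReal_natCast]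
  have hcpow : (t : ℂ) ^ (-s) = t * (t : ℂ) ^ (-s - 1) := by
    rw [cpow_sub _ _ (ofReal_ne_zero.mpr ht0.ne'), cpow_one,
      mul_div_cancel₀ _ (ofReal_ne_zero.mpr ht0.ne')]
  simp only [hfloor, hcpow, smul_eq_mul, neg_add']
  ring

lemma riemannZeta_eq_sub_integral_fract (hs : 0 < s.re) (hs1 : s ≠ 1) :
    riemannZeta s =
      s / (s - 1) - s * ∫ t in Set.Ioi (1 : ℝ), (t : ℂ) ^ (-s - 1) • ((Int.fract t : ℝ) : ℂ) := by
  set F : ℂ → ℂ := fun s ↦ ∫ t in Set.Ioi (1 : ℝ), (t : ℂ) ^ (-s - 1) • ((Int.fract t : ℝ) : ℂ)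
  set U : Set ℂ := {s | 0 < s.re}
  have hU : IsOpen U := isOpen_lt continuous_const continuous_re
  have hzeta : AnalyticOnNhd ℂ riemannZeta₁ U :=
    differentiable_riemannZeta₁.differentiableOn.analyticOnNhd hU
  have hF : AnalyticOnNhd ℂ (fun s ↦ s - (s - 1) * (s * F s)) U := by
    refine DifferentiableOn.analyticOnNhd (fun z hz ↦ ?_) hU
    have hFz : DifferentiableAt ℂ F z := differentiableAt_integral_Ioi_cpow_smul
      aestronglyMeasurable_ofReal_fract norm_ofReal_fract_le_one hz
    exact DifferentiableAt.differentiableWithinAt (by fun_prop)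
  have hnear : riemannZeta₁ =ᶠ[𝓝 2] fun s ↦ s - (s - 1) * (s * F s) := by
    filter_upwards [(isOpen_lt continuous_const continuous_re).mem_nhds
      (show (1 : ℝ) < (2 : ℂ).re by simp)] with z hz
    have hz1 : z ≠ 1 := fun h ↦ by simp [h] at hz
    have hz1' : z - 1 ≠ 0 := sub_ne_zero.mpr hz1
    have h := riemannZeta_eq_sub_integral_fract_of_one_lt_re hz
    rw [riemannZeta_eq_inv_sub_mul hz1] at h
    field_simp at h
    linear_combination h
  have heq : riemannZeta₁ s = s - (s - 1) * (s * F s) :=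
    hzeta.eqOn_of_preconnected_of_eventuallyEq hF (convex_halfSpace_re_gt 0).isPreconnected
      (show (2 : ℂ) ∈ U by simp [U]) hnear hs
  have hs1' : s - 1 ≠ 0 := sub_ne_zero.mpr hs1
  change riemannZeta s = s / (s - 1) - s * F s
  rw [riemannZeta_eq_inv_sub_mul hs1, heq]
  field_simp

lemma norm_riemannZeta_le (hs : 0 < s.re) (hs1 : s ≠ 1) :
    ‖riemannZeta s‖ ≤ ‖s‖ * (‖s - 1‖⁻¹ + s.re⁻¹) := by
  rw [riemannZeta_eq_sub_integral_fract hs hs1]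
  refine (norm_sub_le _ _).trans ?_
  rw [norm_div, norm_mul, mul_add, ← div_eq_mul_inv]
  gcongr
  simpa using norm_integral_Ioi_cpow_smul_le norm_ofReal_fract_le_one hs

lemma norm_deriv_riemannZeta_le (hs : 1 / 2 ≤ s.re) (hs' : 1 ≤ |s.im|) :
    ‖deriv riemannZeta s‖ ≤ 27 * ‖s‖ := by
  have hre : ∀ z ∈ Metric.closedBall s (1 / 4), 1 / 4 ≤ z.re := fun z hz ↦ by
    linarith [neg_le_of_abs_le ((abs_re_le_norm (z - s)).trans (mem_closedBall_iff_norm.mp hz)),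
      sub_re z s]
  have hsub : ∀ z ∈ Metric.closedBall s (1 / 4), 3 / 4 ≤ ‖z - 1‖ := fun z hz ↦ by
    have him : |s.im| ≤ ‖s - 1‖ := by simpa using abs_im_le_norm (s - 1)
    linarith [norm_sub_le_norm_sub_add_norm_sub s z 1, mem_closedBall_iff_norm'.mp hz]
  have hne : ∀ z ∈ Metric.closedBall s (1 / 4), z ≠ 1 := fun z hz h ↦ by
    have := hsub z hz
    norm_num [h] at this
  have hdiff : DiffContOnCl ℂ riemannZeta (Metric.ball s (1 / 4)) := by
    refine DifferentiableOn.diffContOnCl fun z hz ↦ ?_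
    rw [closure_ball _ (by norm_num)] at hz
    exact (differentiableAt_riemannZeta (hne z hz)).differentiableWithinAt
  have hsphere : ∀ z ∈ Metric.sphere s (1 / 4), ‖riemannZeta z‖ ≤ 20 / 3 * ‖s‖ := by
    intro z hz
    have hz' := Metric.sphere_subset_closedBall hz
    have hnorm : ‖z‖ ≤ 5 / 4 * ‖s‖ := by
      linarith [norm_le_norm_add_norm_sub' z s, abs_im_le_norm s, mem_closedBall_iff_norm.mp hz']
    have hre' := hre z hz'
    calc ‖riemannZeta z‖ ≤ ‖z‖ * (‖z - 1‖⁻¹ + z.re⁻¹) :=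
          norm_riemannZeta_le (by linarith) (hne z hz')
      _ ≤ 5 / 4 * ‖s‖ * ((3 / 4)⁻¹ + (1 / 4)⁻¹) := by gcongr; exact hsub z hz'
      _ = 20 / 3 * ‖s‖ := by ring
  linarith [norm_deriv_le_of_forall_mem_sphere_norm_le (by norm_num) hdiff hsphere, norm_nonneg s]

lemma norm_riemannZeta_one_half_sub_le (hs : 1 / 2 ≤ s.re) (hs' : 1 ≤ |s.im|) :
    ‖riemannZeta (1 / 2 + s.im * I) - riemannZeta s‖ ≤ 27 * ‖s‖ * (s.re - 1 / 2) := by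
  set S : Set ℂ := Set.Icc (1 / 2) s.re ×ℂ {s.im}
  have hS : Convex ℝ S := ((convex_Icc _ _).linear_preimage reLm).inter
    ((convex_singleton _).linear_preimage imLm)
  have hdiff : ∀ z ∈ S, DifferentiableAt ℂ riemannZeta z := by
    rintro z ⟨-, him : z.im = s.im⟩
    refine differentiableAt_riemannZeta fun h ↦ ?_
    norm_num [← him, h] at hs'
  have hderiv : ∀ z ∈ S, ‖deriv riemannZeta z‖ ≤ 27 * ‖s‖ := by
    rintro z ⟨⟨hre, hre'⟩, him : z.im = s.im⟩
    refine (norm_deriv_riemannZeta_le hre (him ▸ hs')).trans ?_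
    have hnorm : ‖z‖ ≤ ‖s‖ := by
      refine le_of_sq_le_sq ?_ (norm_nonneg s)
      rw [Complex.sq_norm, Complex.sq_norm, normSq_apply, normSq_apply, him]
      gcongr
    gcongr
  have h := hS.norm_image_sub_le_of_norm_deriv_le hdiff hderiv (x := s) (y := 1 / 2 + s.im * I)
    ⟨⟨hs, le_rfl⟩, rfl⟩ (by simpa [S, mem_reProdIm] using hs)
  have hdist : ‖1 / 2 + s.im * I - s‖ = s.re - 1 / 2 := by
    rw [show 1 / 2 + s.im * I - s = ((1 / 2 - s.re : ℝ) : ℂ) by apply Complex.ext <;> simp,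
      norm_real, Real.norm_of_nonpos (by linarith), neg_sub]
  rwa [hdist] at h

end ZetaBounds

section CriticalLine

variable {C ε : ℝ}

lemma norm_riemannZeta_one_half_le_of_abs_ell_le (hε : 0 < ε) (hε' : ε ≤ 1 / 2)
    (h : ∀ n : ℕ, 1 ≤ n → |ell 1 n| ≤ C * (n : ℝ) ^ (-1 + ε)) {s : ℂ} (hs : 1 / 2 < s.re)
    (hs' : 1 ≤ |s.im|) :
    ‖riemannZeta (1 / 2 + s.im * I)‖ ≤ 27 * ‖s‖ * (s.re - 1 / 2) + 2 +
      C * (∑' n : ℕ, ((n + 1 : ℕ) : ℝ) ^ (-1 - ε)) *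
        ((s.re - 1 / 2) / ‖s‖ ^ 2) ^ (-(2 * ε)) := by
  have hs1 : s ≠ 1 := fun hs1 ↦ by norm_num [hs1] at hs'
  have hpole : ‖(s - 1)⁻¹‖ ≤ 1 := by
    rw [norm_inv]
    exact inv_le_one_of_one_le₀ (hs'.trans (by simpa using abs_im_le_norm (s - 1)))
  have hgamma : ‖(Real.eulerMascheroniConstant : ℂ)‖ ≤ 1 := by
    rw [norm_real, Real.norm_of_nonneg (by linarith [Real.one_half_lt_eulerMascheroniConstant])]
    linarith [Real.eulerMascheroniConstant_lt_two_thirds]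
  calc ‖riemannZeta (1 / 2 + s.im * I)‖
      = ‖(riemannZeta (1 / 2 + s.im * I) - riemannZeta s) + (s - 1)⁻¹ +
          Real.eulerMascheroniConstant +
          (riemannZeta s - (s - 1)⁻¹ - Real.eulerMascheroniConstant)‖ := by
        ring_nf
    _ ≤ _ := norm_add₄_le
    _ ≤ 27 * ‖s‖ * (s.re - 1 / 2) + 1 + 1 +
          C * (∑' n : ℕ, ((n + 1 : ℕ) : ℝ) ^ (-1 - ε)) *
            ((s.re - 1 / 2) / ‖s‖ ^ 2) ^ (-(2 * ε)) := by
        gcongr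
        · exact norm_riemannZeta_one_half_sub_le hs.le hs'
        · exact norm_riemannZeta_sub_le_of_abs_ell_le hε hε' h hs hs1
    _ = _ := by ring

lemma one_div_two_mul_div_sq_rpow_neg_le {T r : ℝ} (hr : 0 < r) (hrT : r ≤ 2 * T) (hε : 0 ≤ ε)
    (hε' : ε ≤ 1 / 2) : (1 / (2 * T) / r ^ 2) ^ (-(2 * ε)) ≤ 8 * T ^ (6 * ε) := by
  have hT : 0 < T := by linarith
  calc (1 / (2 * T) / r ^ 2) ^ (-(2 * ε)) ≤ (1 / (2 * T) / (2 * T) ^ 2) ^ (-(2 * ε)) :=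
        Real.rpow_le_rpow_of_nonpos (by positivity) (by gcongr) (by linarith)
    _ = (8 * T ^ 3) ^ (2 * ε) := by
        rw [Real.rpow_neg (by positivity), ← Real.inv_rpow (by positivity)]
        congr 1
        field_simp
        norm_num
    _ = 8 ^ (2 * ε) * T ^ (6 * ε) := by
        rw [Real.mul_rpow (by norm_num) (by positivity), ← Real.rpow_natCast_mul hT.le]
        ring_nf
    _ ≤ 8 ^ (1 : ℝ) * T ^ (6 * ε) := by
        gcongr
        · norm_num
        · linarith
    _ = 8 * T ^ (6 * ε) := by rw [Real.rpow_one]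

lemma exists_norm_riemannZeta_one_half_le (hε : 0 < ε) (hε' : ε ≤ 1 / 2)
    (h : ∀ n : ℕ, 1 ≤ n → |ell 1 n| ≤ C * (n : ℝ) ^ (-1 + ε)) :
    ∃ B, 0 ≤ B ∧ ∀ t : ℝ, 1 ≤ |t| → ‖riemannZeta (1 / 2 + t * I)‖ ≤ B * |t| ^ (6 * ε) := by
  have hC : 0 ≤ C := by simpa using (abs_nonneg _).trans (h 1 le_rfl)
  set K := ∑' n : ℕ, ((n + 1 : ℕ) : ℝ) ^ (-1 - ε)
  have hK : 0 ≤ K := tsum_nonneg fun n ↦ by positivity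
  refine ⟨29 + C * K * 8, by positivity, fun t ht ↦ ?_⟩
  have ht0 : 0 < |t| := by linarith
  set δ := 1 / (2 * |t|) with hδ_def
  have hδ : 0 < δ := by positivity
  set s : ℂ := 1 / 2 + δ + t * I with hs_def
  have hre : s.re - 1 / 2 = δ := by simp [hs_def]
  have him : s.im = t := by simp [hs_def]
  have hnorm : ‖s‖ ≤ 2 * |t| := by
    have hδ' : δ ≤ 1 / 2 := by
      rw [hδ_def]
      gcongr
      linarith
    have := Complex.norm_le_abs_re_add_abs_im s
    rw [him, abs_of_pos (by linarith)] at this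
    linarith
  have hs0 : 0 < ‖s‖ := norm_pos_iff.mpr (ne_zero_of_re_pos (by linarith))
  have hshift : 27 * ‖s‖ * δ ≤ 27 := by
    calc 27 * ‖s‖ * δ ≤ 27 * (2 * |t|) * δ := by gcongr
      _ = 27 := by rw [hδ_def]; field_simp
  have hone : 1 ≤ |t| ^ (6 * ε) := Real.one_le_rpow ht (by linarith)
  have hmain := norm_riemannZeta_one_half_le_of_abs_ell_le hε hε' h (s := s) (by linarith)
    (by rwa [him])
  rw [hre, him] at hmain
  calc ‖riemannZeta (1 / 2 + t * I)‖
      ≤ 27 * ‖s‖ * δ + 2 + C * K * (δ / ‖s‖ ^ 2) ^ (-(2 * ε)) := hmain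
    _ ≤ 29 + C * K * (8 * |t| ^ (6 * ε)) := by
        gcongr
        · linarith
        · exact one_div_two_mul_div_sq_rpow_neg_le hs0 hnorm hε.le hε'
    _ ≤ (29 + C * K * 8) * |t| ^ (6 * ε) := by linarith

end CriticalLine

theorem stmt9
    (h : ∀ ε : ℝ, 0 < ε → ∃ C : ℝ, ∀ n : ℕ, 1 ≤ n → |ell 1 n| ≤ C * (n : ℝ) ^ (-1 + ε)) :
    LindelofHypothesis := by
  intro ε hε
  set η := min (ε / 6) (1 / 2)
  have hη : 0 < η := lt_min (by positivity) (by norm_num)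
  have hηε : 6 * η ≤ ε := by linarith [min_le_left (ε / 6) (1 / 2)]
  obtain ⟨C, hC⟩ := h η hη
  obtain ⟨B, hB, hbound⟩ := exists_norm_riemannZeta_one_half_le hη (min_le_right _ _) hC
  refine ⟨B, fun t ht ↦ (hbound t ht).trans ?_⟩
  gcongr
end
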